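/- (Correctness of the generalized criterion, algorithm-free form) Let G be a finite set of labeled polynomials (each g^[v] ∈ G satisfies g = v·f⃗) containing f_i^[e_i] for every i = 1,...,m, equipped with a strict partial order <. Suppose that for every critical pair (x^{t_f}, f^[u], x^{t_g}, g^[v]) of two elements of G which is regular and is not gen-rewritable by G, there exists h^[w] ∈ G with w ≠ 0, s(w) = s(x^{t_f} u), and h^[w] < f^[u]. Then G is a labeled Gröbner basis of (f_1,...,f_m). -/

import Mathlib

/-!
The proof is an induction on the signature `T`, along the module order `≺₂`, which is well-founded
because it restricts to `≺₁` on each of the finitely many positions (`wf_of_compat`).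

Since the `f_i^[e_i]` lie in `G`, every `T` is the signature of some `x^t • g` with `g ∈ G`; choose
`g` minimal for `<` (`exists_minAt`). Two claims are proved simultaneously for all `T` (`key`).

* (b) Every labeled polynomial `f^[u]` of signature `T`, `f ≠ 0`, has a reducer in `G` of signature
  at most `T`. Subtract from `f^[u]` the multiple of `x^t • g` that cancels the signature. If the
  leading power products agree, `g` is the reducer. Otherwise the difference has the larger of the
  two as its leading power product and a signature below `T`, so by induction that power product
  has a reducer of signature below `T` (`red_compare`); by (a) it must be that of `f`.
* (a) If `g ≠ 0`, then `x^t • g` has no reducer of signature below `T`. Otherwise take a reducer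
  `x^s • h` whose signature `S` is least, with `h` minimal for `<` among those of signature `S`.
  Then `x^s • h` is not gen-rewritable: comparing it with a minimal rewriter at `S` below `h` would
  produce a reducer of smaller signature, or a smaller reducer of the same signature, or a
  contradiction to (a) at `S`. Hence the critical pair of `g` and `h`, which divides the
  pair `(x^t g, x^s h)`, is regular and not gen-rewritable, and the hypothesis supplies an element
  of `G` smaller than `g` whose signature divides `T`, against the choice of `g`.
-/

open MvPolynomial

noncomputable section

variable {k : Type*} [Field k] {m n : ℕ}

/-- The leading power product of a polynomial, w.r.t. the monomial order `L1`;
`⊥` for the zero polynomial. -/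
def lpp (L1 : LinearOrder (Fin n →₀ ℕ)) (f : MvPolynomial (Fin n) k) :
    WithBot (Fin n →₀ ℕ) :=
  @Finset.max _ L1 f.support

/-- The leading coefficient of a polynomial w.r.t. the monomial order `L1`. -/
def plc (L1 : LinearOrder (Fin n →₀ ℕ)) (f : MvPolynomial (Fin n) k) : k :=
  WithBot.recBotCoe 0 (fun α => MvPolynomial.coeff α f) (lpp L1 f)

/-- The support of a module element `u ∈ R^m`, as a set of module monomials `(i, α)`. -/
def msupport (u : Fin m → MvPolynomial (Fin n) k) : Finset (Fin m × (Fin n →₀ ℕ)) :=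
  Finset.univ.biUnion fun i => (u i).support.image fun α => (i, α)

/-- The signature of a module element, w.r.t. the module term order `L2`;
`⊥` for the zero element. -/
def sig (L2 : LinearOrder (Fin m × (Fin n →₀ ℕ))) (u : Fin m → MvPolynomial (Fin n) k) :
    WithBot (Fin m × (Fin n →₀ ℕ)) :=
  @Finset.max _ L2 (msupport u)

/-- The leading coefficient of a module element (the coefficient at its signature). -/
def mlc (L2 : LinearOrder (Fin m × (Fin n →₀ ℕ))) (u : Fin m → MvPolynomial (Fin n) k) : k :=
  WithBot.recBotCoe 0 (fun p => MvPolynomial.coeff p.2 (u p.1)) (sig L2 u)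

/-- The strict order on `WithBot β` induced by a linear order `L` on `β`
(`⊥` smaller than everything). -/
def bslt {β : Type*} (L : LinearOrder β) (a b : WithBot β) : Prop :=
  WithBot.recBotCoe False (fun y => WithBot.recBotCoe True (fun x => L.lt x y) a) b

/-- The order on `WithBot β` induced by a linear order `L` on `β`. -/
def bsle {β : Type*} (L : LinearOrder β) (a b : WithBot β) : Prop :=
  WithBot.recBotCoe (a = ⊥) (fun y => WithBot.recBotCoe True (fun x => L.le x y) a) b

/-- Multiplication of a module element by the monomial `x^t`. -/
def tsmul (t : Fin n →₀ ℕ) (u : Fin m → MvPolynomial (Fin n) k) :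
    Fin m → MvPolynomial (Fin n) k :=
  fun i => monomial t (1 : k) * u i

/-- `u ⬝ f⃗ = u₁ f₁ + ⋯ + u_m f_m`. -/
def dotf (fvec u : Fin m → MvPolynomial (Fin n) k) : MvPolynomial (Fin n) k :=
  ∑ i, u i * fvec i

/-- The least common multiple of two monomials (componentwise max of exponents). -/
def mlcm (α β : Fin n →₀ ℕ) : Fin n →₀ ℕ :=
  Finsupp.zipWith max (max_self 0) α β

/-- `G` is a labeled Gröbner basis of `(f₁, …, f_m)`. -/
def IsLabeledGB (L1 : LinearOrder (Fin n →₀ ℕ)) (L2 : LinearOrder (Fin m × (Fin n →₀ ℕ)))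
    (fvec : Fin m → MvPolynomial (Fin n) k)
    (G : Set (MvPolynomial (Fin n) k × (Fin m → MvPolynomial (Fin n) k))) : Prop :=
  ∀ (f : MvPolynomial (Fin n) k) (u : Fin m → MvPolynomial (Fin n) k),
    f = dotf fvec u → f ≠ 0 →
      ∃ gv ∈ G, gv.1 ≠ 0 ∧ ∃ t : Fin n →₀ ℕ,
        WithBot.map (fun β => t + β) (lpp L1 gv.1) = lpp L1 f ∧
        bsle L2 (sig L2 (tsmul t gv.2)) (sig L2 u)

/-- `f^[u]` has a standard representation w.r.t. the set `B` of labeled polynomials. -/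
def HasStdRep (L1 : LinearOrder (Fin n →₀ ℕ)) (L2 : LinearOrder (Fin m × (Fin n →₀ ℕ)))
    (B : Set (MvPolynomial (Fin n) k × (Fin m → MvPolynomial (Fin n) k)))
    (f : MvPolynomial (Fin n) k) (u : Fin m → MvPolynomial (Fin n) k) : Prop :=
  ∃ (N : ℕ) (p : Fin N → MvPolynomial (Fin n) k)
      (g : Fin N → MvPolynomial (Fin n) k × (Fin m → MvPolynomial (Fin n) k)),
    (∀ i, g i ∈ B) ∧ f = ∑ i, p i * (g i).1 ∧
    (∀ i, bsle L1 (lpp L1 (p i * (g i).1)) (lpp L1 f)) ∧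
    (∀ i, bsle L2 (sig L2 (fun j => p i * (g i).2 j)) (sig L2 u))

/-- The polynomial part of the S-polynomial of the critical pair `(x^tg, gv, x^th, hw)`. -/
def spolyP (L1 : LinearOrder (Fin n →₀ ℕ))
    (gv hw : MvPolynomial (Fin n) k × (Fin m → MvPolynomial (Fin n) k))
    (tg th : Fin n →₀ ℕ) : MvPolynomial (Fin n) k :=
  monomial tg (1 : k) * gv.1 - C (plc L1 gv.1 / plc L1 hw.1) * (monomial th (1 : k) * hw.1)

/-- The module part of the S-polynomial of the critical pair `(x^tg, gv, x^th, hw)`. -/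
def spolyV (L1 : LinearOrder (Fin n →₀ ℕ))
    (gv hw : MvPolynomial (Fin n) k × (Fin m → MvPolynomial (Fin n) k))
    (tg th : Fin n →₀ ℕ) : Fin m → MvPolynomial (Fin n) k :=
  fun j =>
    monomial tg (1 : k) * gv.2 j - C (plc L1 gv.1 / plc L1 hw.1) * (monomial th (1 : k) * hw.2 j)

/-- `f^[u]` is reducible (in one step, by a one-side-reduction) by the set `G`
of labeled polynomials. -/
def Reducible (L1 : LinearOrder (Fin n →₀ ℕ)) (L2 : LinearOrder (Fin m × (Fin n →₀ ℕ)))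
    (G : Set (MvPolynomial (Fin n) k × (Fin m → MvPolynomial (Fin n) k)))
    (f : MvPolynomial (Fin n) k) (u : Fin m → MvPolynomial (Fin n) k) : Prop :=
  f ≠ 0 ∧ ∃ hw ∈ G, hw.1 ≠ 0 ∧ ∃ t : Fin n →₀ ℕ,
    WithBot.map (fun β => t + β) (lpp L1 hw.1) = lpp L1 f ∧
    bslt L2 (sig L2 (tsmul t hw.2)) (sig L2 u)

/-- `x^t ⬝ fu` is generalized rewritable by the finite set `B` (w.r.t. the strict partial
order `r` on labeled polynomials). -/
def GenRewritable (L2 : LinearOrder (Fin m × (Fin n →₀ ℕ)))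
    (B : Finset (MvPolynomial (Fin n) k × (Fin m → MvPolynomial (Fin n) k)))
    (r : (MvPolynomial (Fin n) k × (Fin m → MvPolynomial (Fin n) k)) →
         (MvPolynomial (Fin n) k × (Fin m → MvPolynomial (Fin n) k)) → Prop)
    (t : Fin n →₀ ℕ)
    (fu : MvPolynomial (Fin n) k × (Fin m → MvPolynomial (Fin n) k)) : Prop :=
  ∃ gv ∈ B, gv.2 ≠ 0 ∧
    (∃ pq qq : Fin m × (Fin n →₀ ℕ), sig L2 gv.2 = ↑pq ∧ sig L2 fu.2 = ↑qq ∧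
      pq.1 = qq.1 ∧ ∃ γ : Fin n →₀ ℕ, pq.2 + γ = t + qq.2) ∧
    r gv fu

/-- The position-over-term module order: `(i, α) ≺ (j, β)` iff `i > j`,
or `i = j` and `α ≺₁ β`. -/
def potLT (L1 : LinearOrder (Fin n →₀ ℕ)) (p q : Fin m × (Fin n →₀ ℕ)) : Prop :=
  q.1 < p.1 ∨ (p.1 = q.1 ∧ L1.lt p.2 q.2)

/-- `p` is the signature of the module element `w` w.r.t. the linear order `lt`
on module monomials. -/
def IsSigWrt (lt : (Fin m × (Fin n →₀ ℕ)) → (Fin m × (Fin n →₀ ℕ)) → Prop)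
    (w : Fin m → MvPolynomial (Fin n) k) (p : Fin m × (Fin n →₀ ℕ)) : Prop :=
  p ∈ msupport w ∧ ∀ q ∈ msupport w, q ≠ p → lt q p

end

/-! ### Order facts for an explicit linear order

The types `Fin n →₀ ℕ` and `Fin m × (Fin n →₀ ℕ)` carry their own componentwise orders, so the
orders `L1` and `L2` are kept out of instance resolution. -/

section Order

variable {X : Type*} (L : LinearOrder X) {a b c : X}

lemma lo_refl (a : X) : L.le a a := L.le_refl a

lemma lo_le_of_lt (h : L.lt a b) : L.le a b := le_of_lt h

lemma lo_lt_of_lt_of_le (h : L.lt a b) (h' : L.le b c) : L.lt a c := lt_of_lt_of_le h h'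

lemma lo_lt_of_le_of_lt (h : L.le a b) (h' : L.lt b c) : L.lt a c := lt_of_le_of_lt h h'

lemma lo_eq_or_lt (h : L.le a b) : a = b ∨ L.lt a b := eq_or_lt_of_le h

lemma lo_not_lt_of_le (h : L.le a b) : ¬ L.lt b a := not_lt_of_ge h

lemma lo_le_of_not_lt (h : ¬ L.lt a b) : L.le b a := not_lt.1 h

end Order

/-! ### Leading positions -/

/-- `a` is the largest point, for the linear order `L`, of the support of `φ`.  Applied to the
coefficient functions of polynomials and of module elements, it describes `lpp` and `sig` by one
and the same notion. -/
def IsLead {X k : Type*} [Zero k] (L : LinearOrder X) (φ : X → k) (a : X) : Prop :=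
  φ a ≠ 0 ∧ ∀ b, φ b ≠ 0 → L.le b a

/-- The coefficient of a module element at a module monomial. -/
def mcoeff {k : Type*} [Field k] {m n : ℕ} (u : Fin m → MvPolynomial (Fin n) k)
    (p : Fin m × (Fin n →₀ ℕ)) : k :=
  coeff p.2 (u p.1)

/-- The coefficient of a polynomial at a monomial, as a function of the monomial. -/
def pcoeff {k : Type*} [Field k] {n : ℕ} (f : MvPolynomial (Fin n) k) (α : Fin n →₀ ℕ) : k :=
  coeff α f

lemma finset_max_eq_coe {X : Type*} (L : LinearOrder X) (s : Finset X) (a : X) :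
    @Finset.max _ L s = (a : WithBot X) ↔ a ∈ s ∧ ∀ b ∈ s, L.le b a := by
  let _ := L
  constructor
  · intro h
    exact ⟨Finset.mem_of_max h, fun b hb => Finset.le_max_of_eq hb h⟩
  · rintro ⟨ha, hb⟩
    apply le_antisymm
    · exact Finset.max_le fun b hbs => WithBot.coe_le_coe.2 (hb b hbs)
    · exact Finset.le_max ha

lemma lpp_eq_coe {k : Type*} [Field k] {n : ℕ} (L1 : LinearOrder (Fin n →₀ ℕ))
    (f : MvPolynomial (Fin n) k) (α : Fin n →₀ ℕ) :
    lpp L1 f = (α : WithBot (Fin n →₀ ℕ)) ↔ IsLead L1 (pcoeff f) α := by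
  unfold lpp IsLead pcoeff
  rw [finset_max_eq_coe]
  simp [MvPolynomial.mem_support_iff]

lemma mem_msupport {k : Type*} [Field k] {m n : ℕ} (u : Fin m → MvPolynomial (Fin n) k)
    (p : Fin m × (Fin n →₀ ℕ)) : p ∈ msupport u ↔ mcoeff u p ≠ 0 := by
  obtain ⟨i, α⟩ := p
  simp [msupport, mcoeff, MvPolynomial.mem_support_iff]

lemma sig_eq_coe {k : Type*} [Field k] {m n : ℕ} (L2 : LinearOrder (Fin m × (Fin n →₀ ℕ)))
    (u : Fin m → MvPolynomial (Fin n) k) (p : Fin m × (Fin n →₀ ℕ)) :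
    sig L2 u = (p : WithBot (Fin m × (Fin n →₀ ℕ))) ↔ IsLead L2 (mcoeff u) p := by
  unfold sig IsLead
  rw [finset_max_eq_coe]
  simp [mem_msupport]

lemma exists_lpp {k : Type*} [Field k] {n : ℕ} (L1 : LinearOrder (Fin n →₀ ℕ))
    {f : MvPolynomial (Fin n) k} (hf : f ≠ 0) : ∃ α, IsLead L1 (pcoeff f) α := by
  have h : f.support.Nonempty := by
    rw [Finset.nonempty_iff_ne_empty]; simpa using hf
  obtain ⟨a, ha⟩ := @Finset.max_of_nonempty _ L1 _ h
  exact ⟨a, (lpp_eq_coe L1 f a).1 ha⟩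

lemma ne_zero_of_lpp {k : Type*} [Field k] {n : ℕ} {L1 : LinearOrder (Fin n →₀ ℕ)}
    {f : MvPolynomial (Fin n) k} {α : Fin n →₀ ℕ} (h : IsLead L1 (pcoeff f) α) : f ≠ 0 := by
  rintro rfl
  exact h.1 (by simp [pcoeff])

lemma exists_sig {k : Type*} [Field k] {m n : ℕ} (L2 : LinearOrder (Fin m × (Fin n →₀ ℕ)))
    {u : Fin m → MvPolynomial (Fin n) k} (hu : u ≠ 0) : ∃ p, IsLead L2 (mcoeff u) p := by
  have h : (msupport u).Nonempty := by
    by_contra hne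
    rw [Finset.not_nonempty_iff_eq_empty] at hne
    apply hu
    funext i
    ext α
    by_contra hα
    have : (i, α) ∈ msupport u := (mem_msupport u _).2 hα
    simp [hne] at this
  obtain ⟨a, ha⟩ := @Finset.max_of_nonempty _ L2 _ h
  exact ⟨a, (sig_eq_coe L2 u a).1 ha⟩

lemma ne_zero_of_sig {k : Type*} [Field k] {m n : ℕ} {L2 : LinearOrder (Fin m × (Fin n →₀ ℕ))}
    {u : Fin m → MvPolynomial (Fin n) k} {p : Fin m × (Fin n →₀ ℕ)}
    (h : IsLead L2 (mcoeff u) p) : u ≠ 0 := by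
  rintro rfl
  exact h.1 (by simp [mcoeff])

lemma IsLead.unique {X k : Type*} [Zero k] {L : LinearOrder X} {φ : X → k} {a b : X}
    (ha : IsLead L φ a) (hb : IsLead L φ b) : a = b :=
  L.le_antisymm _ _ (hb.2 a ha.1) (ha.2 b hb.1)

lemma IsLead.sub_of_lt {X k : Type*} [Ring k] {L : LinearOrder X} {φ ψ : X → k} {a : X}
    (ha : IsLead L φ a) (hψ : ∀ b, ψ b ≠ 0 → L.lt b a) :
    IsLead L (fun x => φ x - ψ x) a := by
  let _ := L
  have hψa : ψ a = 0 := by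
    by_contra h
    exact lt_irrefl a (hψ a h)
  refine ⟨by simpa [hψa] using ha.1, fun b hb => ?_⟩
  by_cases h : ψ b = 0
  · exact ha.2 b (by simpa [h] using hb)
  · exact (hψ b h).le

lemma IsLead.neg_sub {X k : Type*} [Ring k] {L : LinearOrder X} {φ ψ : X → k} {a : X}
    (h : IsLead L (fun x => φ x - ψ x) a) : IsLead L (fun x => ψ x - φ x) a := by
  refine ⟨fun h0 => h.1 ?_, fun b hb => h.2 b fun h0 => hb ?_⟩
  · rw [sub_eq_zero] at h0 ⊢; exact h0.symm
  · rw [sub_eq_zero] at h0 ⊢; exact h0.symm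

lemma IsLead.const_mul {X k : Type*} [Field k] {L : LinearOrder X} {φ : X → k} {a : X} {c : k}
    (hc : c ≠ 0) (h : IsLead L φ a) : IsLead L (fun x => c * φ x) a :=
  ⟨mul_ne_zero hc h.1, fun b hb => h.2 b (right_ne_zero_of_mul hb)⟩

lemma IsLead.cancel {X k : Type*} [Field k] {L : LinearOrder X} {φ ψ : X → k} {a : X}
    (hφ : IsLead L φ a) (hψ : IsLead L ψ a) :
    ∀ b, φ b - (φ a / ψ a) * ψ b ≠ 0 → L.lt b a := by
  let _ := L
  intro b hb
  have hba : b ≠ a := by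
    rintro rfl
    apply hb
    rw [div_mul_cancel₀ _ hψ.1, sub_self]
  refine lt_of_le_of_ne ?_ hba
  by_cases h : ψ b = 0
  · exact hφ.2 b (by simpa [h] using hb)
  · exact hψ.2 b h

/-! ### Multiplication by monomials -/

section Shift

variable {k : Type*} [Field k] {m n : ℕ}

lemma pcoeff_mul_add (t α : Fin n →₀ ℕ) (f : MvPolynomial (Fin n) k) :
    pcoeff (monomial t (1 : k) * f) (t + α) = pcoeff f α := by
  simp [pcoeff]

lemma exists_of_pcoeff_mul_ne_zero {t β : Fin n →₀ ℕ} {f : MvPolynomial (Fin n) k}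
    (h : pcoeff (monomial t (1 : k) * f) β ≠ 0) : ∃ α, β = t + α ∧ pcoeff f α ≠ 0 := by
  unfold pcoeff at h
  rw [coeff_monomial_mul'] at h
  split_ifs at h with hle
  · exact ⟨β - t, (add_tsub_cancel_of_le hle).symm, by simpa [pcoeff] using h⟩
  · exact absurd rfl h

/-- Strictly monotone translation is weakly monotone. -/
lemma add_le_of_le {L1 : LinearOrder (Fin n →₀ ℕ)}
    (h1add : ∀ a b c : Fin n →₀ ℕ, L1.lt a b → L1.lt (a + c) (b + c))
    (t : Fin n →₀ ℕ) {a b : Fin n →₀ ℕ} (h : L1.le a b) : L1.le (t + a) (t + b) := by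
  rcases lo_eq_or_lt L1 h with rfl | h
  · exact lo_refl L1 _
  · rw [add_comm t a, add_comm t b]; exact lo_le_of_lt L1 (h1add a b t h)

/-- The module monomial `x^t • p`. -/
noncomputable def mshift (t : Fin n →₀ ℕ) (p : Fin m × (Fin n →₀ ℕ)) : Fin m × (Fin n →₀ ℕ) :=
  (p.1, t + p.2)

lemma mshift_mshift (s t : Fin n →₀ ℕ) (p : Fin m × (Fin n →₀ ℕ)) :
    mshift s (mshift t p) = mshift (s + t) p := by
  simp [mshift, add_assoc]

lemma mshift_lt {L2 : LinearOrder (Fin m × (Fin n →₀ ℕ))}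
    (h2add : ∀ (p q : Fin m × (Fin n →₀ ℕ)) (γ : Fin n →₀ ℕ),
      L2.lt p q → L2.lt (p.1, p.2 + γ) (q.1, q.2 + γ))
    (t : Fin n →₀ ℕ) {p q : Fin m × (Fin n →₀ ℕ)} (h : L2.lt p q) :
    L2.lt (mshift t p) (mshift t q) := by
  have := h2add p q t h
  rwa [add_comm p.2, add_comm q.2] at this

lemma mshift_le {L2 : LinearOrder (Fin m × (Fin n →₀ ℕ))}
    (h2add : ∀ (p q : Fin m × (Fin n →₀ ℕ)) (γ : Fin n →₀ ℕ),
      L2.lt p q → L2.lt (p.1, p.2 + γ) (q.1, q.2 + γ))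
    (t : Fin n →₀ ℕ) {p q : Fin m × (Fin n →₀ ℕ)} (h : L2.le p q) :
    L2.le (mshift t p) (mshift t q) := by
  rcases lo_eq_or_lt L2 h with rfl | h
  · exact lo_refl L2 _
  · exact lo_le_of_lt L2 (mshift_lt h2add t h)

lemma lt_of_mshift_lt {L2 : LinearOrder (Fin m × (Fin n →₀ ℕ))}
    (h2add : ∀ (p q : Fin m × (Fin n →₀ ℕ)) (γ : Fin n →₀ ℕ),
      L2.lt p q → L2.lt (p.1, p.2 + γ) (q.1, q.2 + γ))
    (t : Fin n →₀ ℕ) {p q : Fin m × (Fin n →₀ ℕ)} (h : L2.lt (mshift t p) (mshift t q)) :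
    L2.lt p q := by
  by_contra hn
  exact lo_not_lt_of_le L2 (mshift_le h2add t (lo_le_of_not_lt L2 hn)) h

lemma IsLead.monomial_mul {L1 : LinearOrder (Fin n →₀ ℕ)}
    (h1add : ∀ a b c : Fin n →₀ ℕ, L1.lt a b → L1.lt (a + c) (b + c))
    {f : MvPolynomial (Fin n) k} {α : Fin n →₀ ℕ} (h : IsLead L1 (pcoeff f) α)
    (t : Fin n →₀ ℕ) : IsLead L1 (pcoeff (monomial t (1 : k) * f)) (t + α) := by
  refine ⟨by rw [pcoeff_mul_add]; exact h.1, fun b hb => ?_⟩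
  obtain ⟨β, rfl, hβ⟩ := exists_of_pcoeff_mul_ne_zero hb
  exact add_le_of_le h1add t (h.2 β hβ)

lemma IsLead.tsmul {L2 : LinearOrder (Fin m × (Fin n →₀ ℕ))}
    (h2add : ∀ (p q : Fin m × (Fin n →₀ ℕ)) (γ : Fin n →₀ ℕ),
      L2.lt p q → L2.lt (p.1, p.2 + γ) (q.1, q.2 + γ))
    {u : Fin m → MvPolynomial (Fin n) k} {p : Fin m × (Fin n →₀ ℕ)}
    (h : IsLead L2 (mcoeff u) p) (t : Fin n →₀ ℕ) :
    IsLead L2 (mcoeff (tsmul t u)) (mshift t p) := by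
  constructor
  · have := pcoeff_mul_add t p.2 (u p.1)
    simp only [mcoeff, mshift, _root_.tsmul]
    unfold pcoeff at this
    rw [this]
    exact h.1
  · rintro ⟨i, β⟩ hb
    obtain ⟨α, rfl, hα⟩ := exists_of_pcoeff_mul_ne_zero (f := u i) (t := t) (β := β) hb
    exact mshift_le h2add t (h.2 (i, α) hα)

lemma dotf_sub_tsmul (fvec u v : Fin m → MvPolynomial (Fin n) k) (c : k) (t : Fin n →₀ ℕ) :
    dotf fvec (fun i => u i - C c * _root_.tsmul t v i)
      = dotf fvec u - C c * (monomial t (1 : k) * dotf fvec v) := by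
  simp only [dotf, _root_.tsmul, Finset.mul_sum, ← Finset.sum_sub_distrib]
  exact Finset.sum_congr rfl fun i _ => by ring

lemma dotf_tsmul (fvec v : Fin m → MvPolynomial (Fin n) k) (t : Fin n →₀ ℕ) :
    dotf fvec (_root_.tsmul t v) = monomial t (1 : k) * dotf fvec v := by
  simp only [dotf, _root_.tsmul, Finset.mul_sum, mul_assoc]

/-- A module term order compatible with a well-founded monomial order is well-founded, because
there are only finitely many positions. -/
lemma wf_of_compat {L1 : LinearOrder (Fin n →₀ ℕ)} {L2 : LinearOrder (Fin m × (Fin n →₀ ℕ))}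
    (h1wf : WellFounded L1.lt)
    (h21 : ∀ (i : Fin m) (α β : Fin n →₀ ℕ), L1.lt α β → L2.lt (i, α) (i, β)) :
    WellFounded L2.lt := by
  rw [WellFounded.wellFounded_iff_has_min]
  intro S hS
  -- take the least exponent in each position that occurs in `S`, then compare these positions
  have hmin : ∀ i : Fin m, (∃ α, (i, α) ∈ S) → ∃ α, (i, α) ∈ S ∧ ∀ β, (i, β) ∈ S →
      L2.le (i, α) (i, β) := by
    rintro i ⟨α, hα⟩
    obtain ⟨a, ha, hm⟩ := h1wf.has_min {α | (i, α) ∈ S} ⟨α, hα⟩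
    refine ⟨a, ha, fun β hβ => ?_⟩
    rcases @lt_trichotomy _ L1 a β with h | h | h
    · exact lo_le_of_lt L2 (h21 i _ _ h)
    · rw [h]; exact lo_refl L2 _
    · exact absurd h (hm β hβ)
  choose a ha hm using hmin
  let I := {i : Fin m // ∃ α, (i, α) ∈ S}
  obtain ⟨⟨i0, α0⟩, h0⟩ := hS
  have : Nonempty I := ⟨⟨i0, α0, h0⟩⟩
  obtain ⟨j, hj⟩ := @Finite.exists_min _ _ _ _ L2 (fun i : I => ((i.1, a i.1 i.2) : Fin m × (Fin n →₀ ℕ)))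
  refine ⟨(j.1, a j.1 j.2), ha j.1 j.2, ?_⟩
  rintro ⟨i, β⟩ hx
  exact lo_not_lt_of_le L2 (L2.le_trans _ _ _ (hj ⟨i, β, hx⟩) (hm i ⟨β, hx⟩ β hx))

end Shift

/-! ### Reducers and minimal rewriters -/

section Main

variable {k : Type*} [Field k] {m n : ℕ}

/-- `x^t • gv` with `gv ∈ G` has leading power product `α` and signature `S`. -/
def RedAt (L1 : LinearOrder (Fin n →₀ ℕ)) (L2 : LinearOrder (Fin m × (Fin n →₀ ℕ)))
    (G : Finset (MvPolynomial (Fin n) k × (Fin m → MvPolynomial (Fin n) k)))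
    (gv : MvPolynomial (Fin n) k × (Fin m → MvPolynomial (Fin n) k)) (t : Fin n →₀ ℕ)
    (S : Fin m × (Fin n →₀ ℕ)) (α : Fin n →₀ ℕ) : Prop :=
  gv ∈ G ∧ ∃ β p, IsLead L1 (pcoeff gv.1) β ∧ IsLead L2 (mcoeff gv.2) p ∧
    t + β = α ∧ mshift t p = S

/-- Some monomial multiple of an element of `G` has leading power product `α` and signature
strictly below `T`. -/
def RedBelow (L1 : LinearOrder (Fin n →₀ ℕ)) (L2 : LinearOrder (Fin m × (Fin n →₀ ℕ)))
    (G : Finset (MvPolynomial (Fin n) k × (Fin m → MvPolynomial (Fin n) k)))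
    (T : Fin m × (Fin n →₀ ℕ)) (α : Fin n →₀ ℕ) : Prop :=
  ∃ S, L2.lt S T ∧ ∃ gv t, RedAt L1 L2 G gv t S α

/-- `gv ∈ G` and `x^t • gv` has signature `T`. -/
def HasSigAt (L2 : LinearOrder (Fin m × (Fin n →₀ ℕ)))
    (G : Finset (MvPolynomial (Fin n) k × (Fin m → MvPolynomial (Fin n) k)))
    (gv : MvPolynomial (Fin n) k × (Fin m → MvPolynomial (Fin n) k)) (t : Fin n →₀ ℕ)
    (T : Fin m × (Fin n →₀ ℕ)) : Prop :=
  gv ∈ G ∧ ∃ p, IsLead L2 (mcoeff gv.2) p ∧ mshift t p = T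

/-- `gv` is `r`-minimal among the elements of `G` whose signature divides `T`, and `x^t` is the
cofactor. Equivalently, `x^t • gv` has signature `T` and is not gen-rewritable. -/
def MinAt (L2 : LinearOrder (Fin m × (Fin n →₀ ℕ)))
    (G : Finset (MvPolynomial (Fin n) k × (Fin m → MvPolynomial (Fin n) k)))
    (r : (MvPolynomial (Fin n) k × (Fin m → MvPolynomial (Fin n) k)) →
         (MvPolynomial (Fin n) k × (Fin m → MvPolynomial (Fin n) k)) → Prop)
    (gv : MvPolynomial (Fin n) k × (Fin m → MvPolynomial (Fin n) k)) (t : Fin n →₀ ℕ)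
    (T : Fin m × (Fin n →₀ ℕ)) : Prop :=
  HasSigAt L2 G gv t T ∧ ∀ hw s, HasSigAt L2 G hw s T → ¬ r hw gv

/-- If some element of the finite set `G` satisfies `P`, there is one that is minimal, for the
strict partial order `r`, among the elements of `G` satisfying `P`. -/
lemma exists_min_of_mem {X : Type*} (G : Finset X) (r : X → X → Prop) (hirrefl : ∀ a, ¬ r a a)
    (htrans : ∀ a b c, r a b → r b c → r a c) (P : X → Prop) {a : X} (ha : a ∈ G) (hP : P a) :
    ∃ b ∈ G, P b ∧ ∀ c ∈ G, P c → ¬ r c b := by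
  have : IsStrictOrder X r := { irrefl := hirrefl, trans := htrans }
  have hwf : (↑G : Set X).WellFoundedOn r := G.finite_toSet.wellFoundedOn
  have hwf' : ({x | x ∈ G ∧ P x} : Set X).WellFoundedOn r := hwf.subset fun x hx => hx.1
  obtain ⟨⟨b, hb⟩, -, hm⟩ := WellFounded.has_min hwf' Set.univ ⟨⟨a, ha, hP⟩, trivial⟩
  exact ⟨b, hb.1, hb.2, fun c hc hPc => hm ⟨c, hc, hPc⟩ trivial⟩

/-- Since `e_i` labels an element of `G`, every module monomial has a minimal rewriter. -/
lemma exists_minAt {L2 : LinearOrder (Fin m × (Fin n →₀ ℕ))}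
    {fvec : Fin m → MvPolynomial (Fin n) k}
    {G : Finset (MvPolynomial (Fin n) k × (Fin m → MvPolynomial (Fin n) k))}
    (hGe : ∀ i : Fin m,
      (fvec i, (Pi.single i (1 : MvPolynomial (Fin n) k) :
        Fin m → MvPolynomial (Fin n) k)) ∈ G)
    {r : (MvPolynomial (Fin n) k × (Fin m → MvPolynomial (Fin n) k)) →
         (MvPolynomial (Fin n) k × (Fin m → MvPolynomial (Fin n) k)) → Prop}
    (hirrefl : ∀ a, ¬ r a a) (htrans : ∀ a b c, r a b → r b c → r a c)
    (T : Fin m × (Fin n →₀ ℕ)) : ∃ gv t, MinAt L2 G r gv t T := by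
  obtain ⟨i, α⟩ := T
  have hlead : IsLead L2 (mcoeff (Pi.single i (1 : MvPolynomial (Fin n) k) :
        Fin m → MvPolynomial (Fin n) k)) (i, 0) := by
    refine ⟨by simp [mcoeff], ?_⟩
    rintro ⟨j, β⟩ hb
    by_cases hj : j = i
    · subst hj
      by_cases hβ : β = 0
      · rw [hβ]; exact lo_refl L2 _
      · exact absurd (by simp [mcoeff, MvPolynomial.coeff_one, Ne.symm hβ]) hb
    · exact absurd (by simp [mcoeff, hj]) hb
  obtain ⟨gv, hgv, ⟨t, ht⟩, hmin⟩ := exists_min_of_mem G r hirrefl htrans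
    (fun gv => ∃ t, HasSigAt L2 G gv t (i, α)) (hGe i)
    ⟨α, hGe i, (i, 0), hlead, by simp [mshift]⟩
  exact ⟨gv, t, ht, fun hw s hs => hmin hw hs.1 ⟨s, hs⟩⟩

/-- Cancelling the signature of `u` with that of `x^t • gv` leaves an element of smaller
signature, whose leading power product is the larger of the two unless they coincide. -/
lemma red_compare {L1 : LinearOrder (Fin n →₀ ℕ)} {L2 : LinearOrder (Fin m × (Fin n →₀ ℕ))}
    (h1add : ∀ a b c : Fin n →₀ ℕ, L1.lt a b → L1.lt (a + c) (b + c))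
    (h2add : ∀ (p q : Fin m × (Fin n →₀ ℕ)) (γ : Fin n →₀ ℕ),
      L2.lt p q → L2.lt (p.1, p.2 + γ) (q.1, q.2 + γ))
    {fvec : Fin m → MvPolynomial (Fin n) k}
    {G : Finset (MvPolynomial (Fin n) k × (Fin m → MvPolynomial (Fin n) k))}
    (hGlabeled : ∀ p ∈ G, p.1 = dotf fvec p.2)
    {T : Fin m × (Fin n →₀ ℕ)}
    (hQ : ∀ u α, (∀ b, mcoeff u b ≠ 0 → L2.lt b T) → IsLead L1 (pcoeff (dotf fvec u)) α →
      RedBelow L1 L2 G T α)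
    {u : Fin m → MvPolynomial (Fin n) k} (hu : IsLead L2 (mcoeff u) T)
    {α : Fin n →₀ ℕ} (hα : IsLead L1 (pcoeff (dotf fvec u)) α)
    {gv : MvPolynomial (Fin n) k × (Fin m → MvPolynomial (Fin n) k)} {t : Fin n →₀ ℕ}
    (hgv : HasSigAt L2 G gv t T) :
    RedAt L1 L2 G gv t T α ∨ RedBelow L1 L2 G T α ∨
      ∃ β, IsLead L1 (pcoeff gv.1) β ∧ RedBelow L1 L2 G T (t + β) := by
  obtain ⟨hG, p, hp, hpT⟩ := hgv
  have hlead : IsLead L2 (mcoeff (_root_.tsmul t gv.2)) T := hpT ▸ hp.tsmul h2add t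
  obtain ⟨c, hc0, hc⟩ : ∃ c : k, c ≠ 0 ∧
      ∀ b, mcoeff u b - c * mcoeff (_root_.tsmul t gv.2) b ≠ 0 → L2.lt b T :=
    ⟨_, div_ne_zero hu.1 hlead.1, hu.cancel hlead⟩
  have hd := dotf_sub_tsmul fvec u gv.2 c t
  rw [← hGlabeled gv hG] at hd
  have hQd := fun α => hQ (fun i => u i - C c * _root_.tsmul t gv.2 i) α
    (by intro b hb; apply hc b; simpa [mcoeff] using hb)
  have hpc : pcoeff (dotf fvec (fun i => u i - C c * _root_.tsmul t gv.2 i))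
      = fun x => pcoeff (dotf fvec u) x - c * pcoeff (monomial t (1 : k) * gv.1) x := by
    rw [hd]; funext x; simp [pcoeff]
  rw [hpc] at hQd
  by_cases hg : gv.1 = 0
  · exact Or.inr (Or.inl (hQd α (hα.sub_of_lt (by simp [hg, pcoeff]))))
  · obtain ⟨β, hβ⟩ := exists_lpp L1 hg
    have hβt := (hβ.monomial_mul h1add t).const_mul hc0
    rcases @lt_trichotomy _ L1 (t + β) α with h | h | h
    · exact Or.inr (Or.inl (hQd α (hα.sub_of_lt fun b hb =>
        lo_lt_of_le_of_lt L1 (hβt.2 b hb) h)))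
    · exact Or.inl ⟨hG, β, p, hβ, hp, h, hpT⟩
    · exact Or.inr (Or.inr ⟨β, hβ, hQd _ (hβt.sub_of_lt fun b hb =>
        lo_lt_of_le_of_lt L1 (hα.2 b hb) h).neg_sub⟩)

lemma mlcm_decomp {γ δ t s α : Fin n →₀ ℕ} (ht : t + γ = α) (hs : s + δ = α) :
    ∃ ε, ε + (mlcm γ δ - γ) = t ∧ ε + (mlcm γ δ - δ) = s := by
  refine ⟨α - mlcm γ δ, ?_, ?_⟩ <;>
  · ext i
    have h1 := DFunLike.congr_fun ht i
    have h2 := DFunLike.congr_fun hs i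
    simp only [Finsupp.add_apply, Finsupp.tsub_apply, mlcm, Finsupp.zipWith_apply] at *
    omega

lemma bslt_coe {β : Type*} (L : LinearOrder β) (a b : β) :
    bslt L (a : WithBot β) (b : WithBot β) ↔ L.lt a b := Iff.rfl

lemma bsle_coe {β : Type*} (L : LinearOrder β) (a b : β) :
    bsle L (a : WithBot β) (b : WithBot β) ↔ L.le a b := Iff.rfl

/-- If a divisor `x^s` of `x^t` makes `gv` gen-rewritable, the rewriter is an `r`-smaller element
whose signature divides that of `x^t • gv`. -/
lemma GenRewritable.exists_hasSigAt {L2 : LinearOrder (Fin m × (Fin n →₀ ℕ))}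
    {G : Finset (MvPolynomial (Fin n) k × (Fin m → MvPolynomial (Fin n) k))}
    {r : (MvPolynomial (Fin n) k × (Fin m → MvPolynomial (Fin n) k)) →
         (MvPolynomial (Fin n) k × (Fin m → MvPolynomial (Fin n) k)) → Prop}
    {gv : MvPolynomial (Fin n) k × (Fin m → MvPolynomial (Fin n) k)} {s ε t : Fin n →₀ ℕ}
    {T : Fin m × (Fin n →₀ ℕ)} (hε : ε + s = t) (hgv : HasSigAt L2 G gv t T)
    (h : GenRewritable L2 G r s gv) : ∃ hw t', HasSigAt L2 G hw t' T ∧ r hw gv := by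
  obtain ⟨hw, hwG, -, ⟨pq, qq, hpq, hqq, h1, γ, hγ⟩, hr⟩ := h
  obtain ⟨-, p, hp, rfl⟩ := hgv
  rw [sig_eq_coe] at hpq hqq
  obtain rfl := hp.unique hqq
  refine ⟨hw, ε + γ, ⟨hwG, pq, hpq, ?_⟩, hr⟩
  ext1
  · exact h1
  · simp only [mshift]
    rw [← hε, add_assoc, add_assoc, add_comm γ, hγ]

/-- The induction along signatures: at every `T`, a multiple `x^t • gv` of a minimal rewriter is
not top-reducible by anything of signature below `T`, and every labeled polynomial of signature
`T` is top-reducible by something of signature at most `T`. -/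
lemma key {L1 : LinearOrder (Fin n →₀ ℕ)} {L2 : LinearOrder (Fin m × (Fin n →₀ ℕ))}
    (h1add : ∀ a b c : Fin n →₀ ℕ, L1.lt a b → L1.lt (a + c) (b + c))
    (h1wf : WellFounded L1.lt)
    (h2add : ∀ (p q : Fin m × (Fin n →₀ ℕ)) (γ : Fin n →₀ ℕ),
      L2.lt p q → L2.lt (p.1, p.2 + γ) (q.1, q.2 + γ))
    (h21 : ∀ (i : Fin m) (α β : Fin n →₀ ℕ), L1.lt α β → L2.lt (i, α) (i, β))
    {fvec : Fin m → MvPolynomial (Fin n) k}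
    {G : Finset (MvPolynomial (Fin n) k × (Fin m → MvPolynomial (Fin n) k))}
    (hGlabeled : ∀ p ∈ G, p.1 = dotf fvec p.2)
    (hGe : ∀ i : Fin m,
      (fvec i, (Pi.single i (1 : MvPolynomial (Fin n) k) :
        Fin m → MvPolynomial (Fin n) k)) ∈ G)
    {r : (MvPolynomial (Fin n) k × (Fin m → MvPolynomial (Fin n) k)) →
         (MvPolynomial (Fin n) k × (Fin m → MvPolynomial (Fin n) k)) → Prop}
    (hirrefl : ∀ a, ¬ r a a)
    (htrans : ∀ a b c, r a b → r b c → r a c)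
    (hcrit : ∀ fu ∈ G, ∀ gv ∈ G, fu.1 ≠ 0 → gv.1 ≠ 0 →
      ∀ γ δ : Fin n →₀ ℕ,
        lpp L1 fu.1 = (γ : WithBot (Fin n →₀ ℕ)) →
        lpp L1 gv.1 = (δ : WithBot (Fin n →₀ ℕ)) →
        bslt L2 (sig L2 (_root_.tsmul (mlcm γ δ - δ) gv.2))
          (sig L2 (_root_.tsmul (mlcm γ δ - γ) fu.2)) →
        ¬ GenRewritable L2 G r (mlcm γ δ - γ) fu →
        ¬ GenRewritable L2 G r (mlcm γ δ - δ) gv →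
        ∃ hw ∈ G, hw.2 ≠ 0 ∧
          sig L2 hw.2 = sig L2 (_root_.tsmul (mlcm γ δ - γ) fu.2) ∧ r hw fu)
    (T : Fin m × (Fin n →₀ ℕ)) :
    (∀ gv t β, MinAt L2 G r gv t T → IsLead L1 (pcoeff gv.1) β →
        ¬ RedBelow L1 L2 G T (t + β)) ∧
    (∀ u α, IsLead L2 (mcoeff u) T → IsLead L1 (pcoeff (dotf fvec u)) α →
        ∃ S, L2.le S T ∧ ∃ gv t, RedAt L1 L2 G gv t S α) := by
  have h2wf := wf_of_compat h1wf h21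
  induction T using h2wf.induction with
  | _ T ih =>
  have hQ : ∀ T', L2.le T' T → ∀ u α, (∀ b, mcoeff u b ≠ 0 → L2.lt b T') →
      IsLead L1 (pcoeff (dotf fvec u)) α → RedBelow L1 L2 G T' α := by
    intro T' hT' u α hu hα
    have hu0 : u ≠ 0 := by
      rintro rfl
      exact ne_zero_of_lpp hα (by simp [dotf])
    obtain ⟨p, hp⟩ := exists_sig L2 hu0
    have hpT := hu p hp.1
    obtain ⟨S, hS, h⟩ := (ih p (lo_lt_of_lt_of_le L2 hpT hT')).2 u α hp hα
    exact ⟨S, lo_lt_of_le_of_lt L2 hS hpT, h⟩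
  have hA : ∀ gv t β, MinAt L2 G r gv t T → IsLead L1 (pcoeff gv.1) β →
      ¬ RedBelow L1 L2 G T (t + β) := by
    rintro gv t β ⟨hgv, hmin⟩ hβ ⟨S₀, hS₀⟩
    -- the reducer of least signature `S`, and of least rank under `r` among those
    obtain ⟨S, ⟨hST, g₀, t₀, hg₀⟩, hSmin⟩ := h2wf.has_min
      {S | L2.lt S T ∧ ∃ gv t', RedAt L1 L2 G gv t' S (t + β)} ⟨S₀, hS₀⟩
    obtain ⟨hw, hwG, ⟨s, hs⟩, hwmin⟩ := exists_min_of_mem G r hirrefl htrans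
      (fun hw => ∃ s, RedAt L1 L2 G hw s S (t + β)) hg₀.1 ⟨t₀, hg₀⟩
    obtain ⟨-, δ, q, hδ, hq, hsδ, hqS⟩ := hs
    have hnb : ¬ RedBelow L1 L2 G S (t + β) := by
      rintro ⟨S', hS', h⟩
      exact hSmin S' ⟨lo_lt_of_lt_of_le L2 hS' (lo_le_of_lt L2 hST), h⟩ hS'
    have hnorw : ∀ g' t', HasSigAt L2 G g' t' S → ¬ r g' hw := by
      intro g' t' hg' hr
      obtain ⟨g₁, hg₁G, ⟨⟨t₁, ht₁⟩, hr₁⟩, hmin₁⟩ := exists_min_of_mem G r hirrefl htrans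
        (fun g => (∃ t, HasSigAt L2 G g t S) ∧ r g hw) hg'.1 ⟨⟨t', hg'⟩, hr⟩
      have hM : MinAt L2 G r g₁ t₁ S := ⟨ht₁, fun g₂ t₂ h₂ hr₂ =>
        hmin₁ g₂ h₂.1 ⟨⟨t₂, h₂⟩, htrans _ _ _ hr₂ hr₁⟩ hr₂⟩
      have hlead : IsLead L1 (pcoeff (dotf fvec (_root_.tsmul s hw.2))) (t + β) := by
        rw [dotf_tsmul, ← hGlabeled hw hwG, ← hsδ]
        exact hδ.monomial_mul h1add s
      rcases red_compare h1add h2add hGlabeled (hQ S (lo_le_of_lt L2 hST))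
        (hqS ▸ hq.tsmul h2add s) hlead ht₁ with h | h | ⟨β₁, hβ₁, h⟩
      · exact hwmin g₁ hg₁G ⟨t₁, h⟩ hr₁
      · exact hnb h
      · exact (ih S hST).1 g₁ t₁ β₁ hM hβ₁ h
    obtain ⟨ε, hε1, hε2⟩ := mlcm_decomp (γ := β) (δ := δ) (t := t) (s := s) rfl hsδ
    have hgv' := hgv
    obtain ⟨hgG, p, hp, hpT⟩ := hgv
    have hps := hp.tsmul h2add (mlcm β δ - β)
    obtain ⟨h', hh'G, -, hsig, hr⟩ := hcrit gv hgG hw hwG (ne_zero_of_lpp hβ) (ne_zero_of_lpp hδ)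
      β δ ((lpp_eq_coe _ _ _).2 hβ) ((lpp_eq_coe _ _ _).2 hδ)
      (by
        rw [(sig_eq_coe _ _ _).2 hps,
          (sig_eq_coe _ _ _).2 (hq.tsmul h2add (mlcm β δ - δ)), bslt_coe]
        apply lt_of_mshift_lt h2add ε
        rw [mshift_mshift, mshift_mshift, hε1, hε2, hpT, hqS]
        exact hST)
      (fun h => by
        obtain ⟨h', t', h1, h2⟩ := h.exists_hasSigAt hε1 hgv'
        exact hmin h' t' h1 h2)
      (fun h => by
        obtain ⟨h', t', h1, h2⟩ := h.exists_hasSigAt hε2 ⟨hwG, q, hq, hqS⟩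
        exact hnorw h' t' h1 h2)
    rw [(sig_eq_coe _ _ _).2 hps, sig_eq_coe] at hsig
    exact hmin h' ε ⟨hh'G, _, hsig, by rw [mshift_mshift, hε1, hpT]⟩ hr
  refine ⟨hA, fun u α hu hα => ?_⟩
  obtain ⟨gv, t, hM⟩ := exists_minAt (L2 := L2) hGe hirrefl htrans T
  rcases red_compare h1add h2add hGlabeled (hQ T (lo_refl L2 T)) hu hα hM.1 with
    h | ⟨S, hS, h⟩ | ⟨β, hβ, h⟩
  · exact ⟨T, lo_refl L2 T, gv, t, h⟩
  · exact ⟨S, lo_le_of_lt L2 hS, h⟩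
  · exact absurd h (hA gv t β hM hβ)

end Main

/-- **Correctness of the generalized criterion (algorithm-free form).**
Let `G` be a finite set of labeled polynomials containing every `fᵢ^[eᵢ]`, equipped with
a strict partial order `r`.  If for every critical pair `(x^{t_f}, f^[u], x^{t_g}, g^[v])`
of two elements of `G` which is regular and not gen-rewritable by `G` there exists
`h^[w] ∈ G` with `w ≠ 0`, `s(w) = s(x^{t_f} u)` and `h^[w] < f^[u]`, then `G` is a
labeled Gröbner basis of `(f₁, …, f_m)`. -/
theorem generalized_criterion_correct (k : Type*) [Field k] (n m : ℕ)
    (L1 : LinearOrder (Fin n →₀ ℕ)) (L2 : LinearOrder (Fin m × (Fin n →₀ ℕ)))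
    (h1add : ∀ a b c : Fin n →₀ ℕ, L1.lt a b → L1.lt (a + c) (b + c))
    (h1wf : WellFounded L1.lt)
    (h2add : ∀ (p q : Fin m × (Fin n →₀ ℕ)) (γ : Fin n →₀ ℕ),
      L2.lt p q → L2.lt (p.1, p.2 + γ) (q.1, q.2 + γ))
    (h21 : ∀ (i : Fin m) (α β : Fin n →₀ ℕ), L1.lt α β → L2.lt (i, α) (i, β))
    (fvec : Fin m → MvPolynomial (Fin n) k)
    (G : Finset (MvPolynomial (Fin n) k × (Fin m → MvPolynomial (Fin n) k)))
    (hGlabeled : ∀ p ∈ G, p.1 = dotf fvec p.2)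
    (hGe : ∀ i : Fin m,
      (fvec i, (Pi.single i (1 : MvPolynomial (Fin n) k) :
        Fin m → MvPolynomial (Fin n) k)) ∈ G)
    (r : (MvPolynomial (Fin n) k × (Fin m → MvPolynomial (Fin n) k)) →
         (MvPolynomial (Fin n) k × (Fin m → MvPolynomial (Fin n) k)) → Prop)
    (hirrefl : ∀ a, ¬ r a a)
    (htrans : ∀ a b c, r a b → r b c → r a c)
    (hcrit : ∀ fu ∈ G, ∀ gv ∈ G, fu.1 ≠ 0 → gv.1 ≠ 0 →
      ∀ γ δ : Fin n →₀ ℕ,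
        lpp L1 fu.1 = (γ : WithBot (Fin n →₀ ℕ)) →
        lpp L1 gv.1 = (δ : WithBot (Fin n →₀ ℕ)) →
        -- the critical pair `(x^{t_f}, fu, x^{t_g}, gv)` is regular
        bslt L2 (sig L2 (tsmul (mlcm γ δ - δ) gv.2)) (sig L2 (tsmul (mlcm γ δ - γ) fu.2)) →
        -- and it is not gen-rewritable by `G`
        ¬ GenRewritable L2 G r (mlcm γ δ - γ) fu →
        ¬ GenRewritable L2 G r (mlcm γ δ - δ) gv →
        ∃ hw ∈ G, hw.2 ≠ 0 ∧
          sig L2 hw.2 = sig L2 (tsmul (mlcm γ δ - γ) fu.2) ∧ r hw fu) :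
    IsLabeledGB L1 L2 fvec (↑G) := by
  intro f u hf hf0
  obtain ⟨α, hα⟩ := exists_lpp L1 hf0
  have hu0 : u ≠ 0 := by
    rintro rfl
    exact hf0 (by simp [hf, dotf])
  obtain ⟨T, hT⟩ := exists_sig L2 hu0
  obtain ⟨S, hS, gv, t, hG, β, p, hβ, hp, htβ, hpS⟩ :=
    (key h1add h1wf h2add h21 hGlabeled hGe hirrefl htrans hcrit T).2 u α hT (hf ▸ hα)
  refine ⟨gv, hG, ne_zero_of_lpp hβ, t, ?_, ?_⟩
  · rw [(lpp_eq_coe _ _ _).2 hβ, (lpp_eq_coe _ _ _).2 hα, WithBot.map_coe, htβ]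
  · rw [(sig_eq_coe _ _ _).2 (hp.tsmul h2add t), (sig_eq_coe _ _ _).2 hT, bsle_coe, hpS]
    exact hS
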